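/- arXiv:2312.01869 — 3 statements merged into one kernel-verified Lean document; each statement's English description precedes it below -/
import Mathlib

section
/- (Concatenation of nodes.) Let A, D₁, D₂ : ℝ → ℝ and β₁, β₂ : ℝ → ℝ be nonnegative functions with A nonnegative. Suppose that for all t ≥ 0, D₁(t) ≥ inf_{s ∈ [0,t]} (A(s) + β₁(t − s)) (the first system offers service curve β₁ to input A with output D₁) and D₂(t) ≥ inf_{s ∈ [0,t]} (D₁(s) + β₂(t − s)) (the second system offers service curve β₂ to input D₁ with output D₂). Then for all t ≥ 0, D₂(t) ≥ inf_{s ∈ [0,t]} (A(s) + (β₁ ⊗ β₂)(t − s)); that is, the concatenation of the two systems offers the service curve β₁ ⊗ β₂ to the flow. -/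
/-- Min-plus convolution: `(f ⊗ g)(t) = inf_{s ∈ [0,t]} (f s + g (t - s))`. -/
noncomputable def mpConv (f g : ℝ → ℝ) : ℝ → ℝ :=
  fun t => sInf ((fun s => f s + g (t - s)) '' Set.Icc 0 t)

/-!
Min-plus convolution is monotone in its left argument and satisfies the inequality half of
associativity, so `D₂ ≥ D₁ ⊗ β₂ ≥ (A ⊗ β₁) ⊗ β₂ ≥ A ⊗ (β₁ ⊗ β₂)`. Subtraction of values makes
every bound by an infimum a bound by its members, so no approximation of infima is needed.
-/

section Basic

variable {T V : Type*} [Preorder T] [Zero T]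

/-- Boundedness below on every interval `[0, t]`, a condition under which the infima defining
min-plus convolutions are genuine. -/
def LocallyBddBelow [LE V] (f : T → V) : Prop :=
  ∀ t, BddBelow (f '' Set.Icc 0 t)

theorem LocallyBddBelow.of_forall_le [LE V] {f : T → V} {c : V} (h : ∀ t, c ≤ f t) :
    LocallyBddBelow f :=
  fun _ => ⟨c, Set.forall_mem_image.2 fun s _ => h s⟩

variable [Sub T] [Add V] [ConditionallyCompleteLattice V]

/-- Min-plus convolution for times in `T` and values in `V`; for `T = V = ℝ` it is definitionally
equal to `mpConv`. -/
noncomputable def minPlusConv (f g : T → V) (t : T) : V :=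
  sInf ((fun s => f s + g (t - s)) '' Set.Icc 0 t)

/-- A system with cumulative input `A` and cumulative output `D` offers the service curve `β`. -/
def OffersServiceCurve (β A D : T → V) : Prop :=
  ∀ t, 0 ≤ t → minPlusConv A β t ≤ D t

theorem le_minPlusConv {f g : T → V} {t : T} {c : V} (ht : 0 ≤ t)
    (h : ∀ s ∈ Set.Icc 0 t, c ≤ f s + g (t - s)) : c ≤ minPlusConv f g t :=
  le_csInf ((Set.nonempty_Icc.2 ht).image _) (Set.forall_mem_image.2 h)

end Basic

section OrderedAddCommMonoid

variable {T V : Type*} [AddCommGroup T] [Preorder T] [IsOrderedAddMonoid T] [AddCommMonoid V]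

theorem LocallyBddBelow.exists_le_add [Preorder V] [IsOrderedAddMonoid V] {f g : T → V}
    (hf : LocallyBddBelow f) (hg : LocallyBddBelow g) (t : T) :
    ∃ c, ∀ r ≤ t, ∀ s ∈ Set.Icc 0 r, c ≤ f s + g (r - s) := by
  obtain ⟨a, ha⟩ := hf t
  obtain ⟨b, hb⟩ := hg t
  refine ⟨a + b, fun r hr s hs => add_le_add ?_ ?_⟩
  · exact ha (Set.mem_image_of_mem f ⟨hs.1, hs.2.trans hr⟩)
  · exact hb (Set.mem_image_of_mem g ⟨sub_nonneg.2 hs.2, (sub_le_self r hs.1).trans hr⟩)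

variable [ConditionallyCompleteLattice V] [IsOrderedAddMonoid V] {f f' g : T → V}

theorem LocallyBddBelow.minPlusConv (hf : LocallyBddBelow f) (hg : LocallyBddBelow g) :
    LocallyBddBelow (minPlusConv f g) := fun t =>
  let ⟨c, hc⟩ := hf.exists_le_add hg t
  ⟨c, Set.forall_mem_image.2 fun r hr => le_minPlusConv hr.1 (hc r hr.2)⟩

theorem minPlusConv_le (hf : LocallyBddBelow f) (hg : LocallyBddBelow g) {s t : T}
    (hs : s ∈ Set.Icc 0 t) : minPlusConv f g t ≤ f s + g (t - s) :=
  let ⟨c, hc⟩ := hf.exists_le_add hg t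
  csInf_le ⟨c, Set.forall_mem_image.2 (hc t le_rfl)⟩ (Set.mem_image_of_mem _ hs)

theorem minPlusConv_mono_left (hf : LocallyBddBelow f) (hg : LocallyBddBelow g) {t : T}
    (ht : 0 ≤ t) (hff' : ∀ s ∈ Set.Icc 0 t, f s ≤ f' s) :
    minPlusConv f g t ≤ minPlusConv f' g t :=
  le_minPlusConv ht fun s hs =>
    (minPlusConv_le hf hg hs).trans (add_le_add_left (hff' s hs) _)

end OrderedAddCommMonoid

section OrderedAddCommGroup

variable {T V : Type*} [AddCommGroup T] [Preorder T] [IsOrderedAddMonoid T]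
  [AddCommGroup V] [ConditionallyCompleteLattice V] [IsOrderedAddMonoid V]

theorem minPlusConv_assoc_le {f g h : T → V} (hf : LocallyBddBelow f) (hg : LocallyBddBelow g)
    (hh : LocallyBddBelow h) {t : T} (ht : 0 ≤ t) :
    minPlusConv f (minPlusConv g h) t ≤ minPlusConv (minPlusConv f g) h t := by
  refine le_minPlusConv ht fun u hu => sub_le_iff_le_add.1 ?_
  refine le_minPlusConv hu.1 fun v hv => sub_le_iff_le_add.2 ?_
  have hv_mem : v ∈ Set.Icc 0 t := ⟨hv.1, hv.2.trans hu.2⟩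
  have huv_mem : u - v ∈ Set.Icc 0 (t - v) := ⟨sub_nonneg.2 hv.2, sub_le_sub_right hu.2 v⟩
  calc minPlusConv f (minPlusConv g h) t
      ≤ f v + minPlusConv g h (t - v) := minPlusConv_le hf (hg.minPlusConv hh) hv_mem
    _ ≤ f v + (g (u - v) + h (t - v - (u - v))) := by
        gcongr
        exact minPlusConv_le hg hh huv_mem
    _ = f v + g (u - v) + h (t - u) := by rw [sub_sub_sub_cancel_right, add_assoc]

theorem concatenation_of_nodes_general {A D₁ D₂ β₁ β₂ : T → V} (hA : LocallyBddBelow A)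
    (hβ₁ : LocallyBddBelow β₁) (hβ₂ : LocallyBddBelow β₂)
    (h₁ : OffersServiceCurve β₁ A D₁) (h₂ : OffersServiceCurve β₂ D₁ D₂) :
    OffersServiceCurve (minPlusConv β₁ β₂) A D₂ := fun t ht =>
  calc minPlusConv A (minPlusConv β₁ β₂) t
      ≤ minPlusConv (minPlusConv A β₁) β₂ t := minPlusConv_assoc_le hA hβ₁ hβ₂ ht
    _ ≤ minPlusConv D₁ β₂ t :=
        minPlusConv_mono_left (hA.minPlusConv hβ₁) hβ₂ ht fun s hs => h₁ s hs.1
    _ ≤ D₂ t := h₂ t ht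

end OrderedAddCommGroup

/-- **Concatenation of nodes.** If a first system offers service curve `β₁` to input
`A` with output `D₁`, and a second system offers service curve `β₂` to input `D₁`
with output `D₂`, then the concatenation offers the service curve `β₁ ⊗ β₂` to the
flow: `D₂(t) ≥ inf_{s ∈ [0,t]} (A(s) + (β₁ ⊗ β₂)(t − s))` for all `t ≥ 0`. -/
theorem concatenation_of_nodes
    (A D₁ D₂ β₁ β₂ : ℝ → ℝ)
    (hA : ∀ x, 0 ≤ A x) (hD₁ : ∀ x, 0 ≤ D₁ x) (hD₂ : ∀ x, 0 ≤ D₂ x)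
    (hβ₁ : ∀ x, 0 ≤ β₁ x) (hβ₂ : ∀ x, 0 ≤ β₂ x)
    (h1 : ∀ t : ℝ, 0 ≤ t → sInf ((fun s => A s + β₁ (t - s)) '' Set.Icc 0 t) ≤ D₁ t)
    (h2 : ∀ t : ℝ, 0 ≤ t → sInf ((fun s => D₁ s + β₂ (t - s)) '' Set.Icc 0 t) ≤ D₂ t) :
    ∀ t : ℝ, 0 ≤ t →
      sInf ((fun s => A s + mpConv β₁ β₂ (t - s)) '' Set.Icc 0 t) ≤ D₂ t :=
  concatenation_of_nodes_general (.of_forall_le hA) (.of_forall_le hβ₁) (.of_forall_le hβ₂) h1 h2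
end

section
/- (Concatenation of n rate-latency servers.) Let m ≥ 1 and for k = 1, …, m let R_k ≥ 0 and T_k ≥ 0, and let β_{R,T}(t) = R·max(t − T, 0) denote the rate-latency curve with rate R and latency T. Then the iterated min-plus convolution satisfies, for every t ≥ 0, (β_{R₁,T₁} ⊗ β_{R₂,T₂} ⊗ ⋯ ⊗ β_{R_m,T_m})(t) = (min_{1 ≤ k ≤ m} R_k)·max(t − Σ_{k=1}^{m} T_k, 0). -/
/-- Iterated (left-nested) min-plus convolution `β 0 ⊗ β 1 ⊗ ⋯ ⊗ β k` of a family
of `k + 1` functions. -/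
noncomputable def iterMpConv : (k : ℕ) → (Fin (k + 1) → ℝ → ℝ) → ℝ → ℝ
  | 0, β => β 0
  | k + 1, β => mpConv (β 0) (iterMpConv k fun i => β i.succ)

/-!
To achieve the infimum for two servers, give the faster one at most its own latency, which costs
nothing, and the slower one all the remaining time: this costs `min R r * max (t - (T + S)) 0`. No
other split is cheaper: both rates are at least `min R r`, and the positive parts of `s - T` and
`t - s - S` add up to at least that of `t - (T + S)`.
-/

theorem ciInf_fin_succ {α : Type*} [ConditionallyCompleteLattice α] {n : ℕ}
    (f : Fin (n + 2) → α) : ⨅ i, f i = f 0 ⊓ ⨅ i : Fin (n + 1), f i.succ := by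
  rw [iInf, Fin.range_fin_succ, csInf_insert (Set.finite_range _).bddBelow (Set.range_nonempty _)]
  rfl

section MinPlusConvolution

variable {f f' g g' : ℝ → ℝ} {t : ℝ}

theorem mpConv_congr (hf : Set.EqOn f f' (Set.Icc 0 t)) (hg : Set.EqOn g g' (Set.Icc 0 t)) :
    mpConv f g t = mpConv f' g' t := by
  refine congrArg sInf (Set.image_congr fun s hs => ?_)
  rw [hf hs, hg ⟨sub_nonneg.2 hs.2, sub_le_self t hs.1⟩]

theorem mpConv_comm (f g : ℝ → ℝ) : mpConv f g = mpConv g f := by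
  funext t
  have reflect : (fun s => t - s) '' Set.Icc 0 t = Set.Icc 0 t := by
    rw [Set.image_const_sub_Icc, sub_self, sub_zero]
  unfold mpConv
  rw [← reflect, Set.image_image, reflect]
  simp only [sub_sub_cancel, add_comm]

end MinPlusConvolution

/-- The rate-latency curve `β_{R,T}` with rate `R` and latency `T`, on all of `ℝ`. -/
def rateLatency (R T : ℝ) : ℝ → ℝ :=
  fun t => R * max (t - T) 0

section RateLatency

variable {R r T S t : ℝ}

theorem rateLatency_of_le (R : ℝ) (h : t ≤ T) : rateLatency R T t = 0 := by
  rw [rateLatency, max_eq_right (sub_nonpos.2 h), mul_zero]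

theorem rateLatency_max_sub_zero (R S t : ℝ) (hT : 0 ≤ T) :
    rateLatency R T (max (t - S) 0) = rateLatency R (T + S) t := by
  rw [rateLatency, rateLatency, ← max_sub_sub_right, zero_sub, max_assoc,
    max_eq_right (neg_nonpos.2 hT), sub_sub, add_comm S T]

theorem rateLatency_min_add_le (hR : 0 ≤ R) (hr : 0 ≤ r) (T S u v : ℝ) :
    rateLatency (min R r) (T + S) (u + v) ≤ rateLatency R T u + rateLatency r S v := by
  have posPart_add_le : max (u + v - (T + S)) 0 ≤ max (u - T) 0 + max (v - S) 0 := by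
    simpa only [add_sub_add_comm, add_zero] using
      max_add_add_le_max_add_max (a := u - T) (b := v - S) (c := 0) (d := 0)
  calc min R r * max (u + v - (T + S)) 0
      ≤ min R r * (max (u - T) 0 + max (v - S) 0) :=
        mul_le_mul_of_nonneg_left posPart_add_le (le_min hR hr)
    _ = min R r * max (u - T) 0 + min R r * max (v - S) 0 := mul_add _ _ _
    _ ≤ R * max (u - T) 0 + r * max (v - S) 0 := by
        gcongr
        exacts [min_le_left R r, min_le_right R r]

theorem mpConv_rateLatency (hR : 0 ≤ R) (hr : 0 ≤ r) (hT : 0 ≤ T) (hS : 0 ≤ S) (ht : 0 ≤ t) :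
    mpConv (rateLatency R T) (rateLatency r S) t = rateLatency (min R r) (T + S) t := by
  wlog h : R ≤ r generalizing R r T S
  · rw [mpConv_comm, min_comm, add_comm]
    exact this hr hR hS hT (le_of_not_ge h)
  refine IsLeast.csInf_eq ⟨⟨max (t - S) 0, ⟨le_max_right _ _, ?_⟩, ?_⟩, ?_⟩
  · exact max_le (sub_le_self t hS) ht
  · have rest_le_latency : t - max (t - S) 0 ≤ S := sub_le_comm.1 (le_max_left _ _)
    simp only [rateLatency_of_le r rest_le_latency, add_zero, rateLatency_max_sub_zero R S t hT,
      min_eq_left h]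
  · rintro _ ⟨s, -, rfl⟩
    simpa only [add_sub_cancel] using rateLatency_min_add_le hR hr T S s (t - s)

end RateLatency

/-- **Concatenation of `m` rate-latency servers** (`m = k + 1 ≥ 1`): the iterated
min-plus convolution of the rate-latency curves `β_{R i, T i}`, `i = 0, …, k`, is the
rate-latency curve with rate `min_i R i` and latency `∑ i, T i`. -/
theorem rate_latency_concat_n (k : ℕ) (R T : Fin (k + 1) → ℝ)
    (hR : ∀ i, 0 ≤ R i) (hT : ∀ i, 0 ≤ T i) :
    ∀ t : ℝ, 0 ≤ t →
      iterMpConv k (fun i => fun u => R i * max (u - T i) 0) t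
        = (⨅ i, R i) * max (t - ∑ i, T i) 0 := by
  induction k with
  | zero => simp [iterMpConv]
  | succ k ih =>
    intro t ht
    have tail_eq : Set.EqOn (iterMpConv k fun i => rateLatency (R i.succ) (T i.succ))
        (rateLatency (⨅ i : Fin (k + 1), R i.succ) (∑ i : Fin (k + 1), T i.succ))
        (Set.Icc 0 t) := fun u hu =>
      ih (fun i => R i.succ) (fun i => T i.succ) (fun i => hR i.succ) (fun i => hT i.succ) u hu.1
    rw [ciInf_fin_succ, Fin.sum_univ_succ]
    calc mpConv (rateLatency (R 0) (T 0))
          (iterMpConv k fun i => rateLatency (R i.succ) (T i.succ)) t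
        = mpConv (rateLatency (R 0) (T 0))
            (rateLatency (⨅ i : Fin (k + 1), R i.succ) (∑ i : Fin (k + 1), T i.succ)) t :=
          mpConv_congr (Set.eqOn_refl _ _) tail_eq
      _ = _ :=
          mpConv_rateLatency (hR 0) (Real.iInf_nonneg fun i => hR i.succ) (hT 0)
            (Finset.sum_nonneg fun i _ => hT i.succ) ht
end

section
/- (Theorem 2: Blind multiplexing.) Let A₁, A₂, D₁, D₂ : [0,∞) → ℝ be continuous nondecreasing functions with A₁(0) = A₂(0) = D₁(0) = D₂(0) = 0, D₁(t) ≤ A₁(t) and D₂(t) ≤ A₂(t) for all t ≥ 0. Let β : [0,∞) → ℝ be such that the node offers the strict service curve β to the aggregate: for all 0 ≤ s ≤ t, if A₁(u) + A₂(u) > D₁(u) + D₂(u) for every u ∈ (s, t], then (D₁(t) + D₂(t)) − (D₁(s) + D₂(s)) ≥ β(t − s). Let α₂ : [0,∞) → ℝ be an arrival curve for flow 2, i.e., A₂(t) − A₂(s) ≤ α₂(t − s) for all 0 ≤ s ≤ t, and assume β(0) ≤ α₂(0). Define β₁(t) = max(β(t) − α₂(t), 0) and assume β₁ is nondecreasing.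 Then β₁ is a service curve for flow 1: for all t ≥ 0, D₁(t) ≥ inf_{s ∈ [0,t]} (A₁(s) + β₁(t − s)). -/
/-!
Fix `t` and let `s` be the last instant before `t` at which the aggregate backlog vanishes. Since no
output exceeds its input, neither flow is backlogged at `s`. On `(s, t]` the aggregate is served at
least `β (t - s)`, of which flow 2 can take at most `A₂ t - A₂ s ≤ α₂ (t - s)`; flow 1 receives the
rest. As `D₁` is nondecreasing, that amount can be replaced by its positive part, so the infimum
defining the service curve of flow 1 is bounded by its value at `s`.
-/

open Set

section Curves

variable {T M : Type*} [Preorder T] [Zero T] [Sub T]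

/-- `α` is an arrival curve for the cumulative input `A`. Time only needs a zero and a subtraction,
which covers discrete as well as continuous time. -/
def IsArrivalCurve [LE M] [Sub M] (A α : T → M) : Prop :=
  ∀ s t : T, 0 ≤ s → s ≤ t → A t - A s ≤ α (t - s)

/-- `β` is a strict service curve for a system with cumulative input `A` and cumulative output `D`.
Backlogged periods are left-open intervals `(s, t]`, so that one may start at an instant of zero
backlog. -/
def IsStrictServiceCurve [Preorder M] [Sub M] (A D β : T → M) : Prop :=
  ∀ s t : T, 0 ≤ s → s ≤ t → (∀ u ∈ Ioc s t, D u < A u) → β (t - s) ≤ D t - D s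

/-- `β` is a service curve for a system with cumulative input `A` and cumulative output `D`: the
output dominates the min-plus convolution of `A` and `β`. The infimum is meaningful only when the
set is bounded below, as it is for nonnegative `A` and `β`. -/
def IsServiceCurve [LE M] [Add M] [InfSet M] (A D β : T → M) : Prop :=
  ∀ t : T, 0 ≤ t → sInf ((fun s => A s + β (t - s)) '' Icc 0 t) ≤ D t

theorem isServiceCurve_of_forall_exists [ConditionallyCompleteLattice M] [AddZeroClass M]
    [AddLeftMono M] {A D β : T → M} (hA : ∀ t, BddBelow (A '' Icc 0 t)) (hβ : 0 ≤ β)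
    (h : ∀ t, 0 ≤ t → ∃ s ∈ Icc 0 t, A s + β (t - s) ≤ D t) : IsServiceCurve A D β := by
  intro t ht
  obtain ⟨s, hs, hle⟩ := h t ht
  obtain ⟨b, hb⟩ := hA t
  refine csInf_le_of_le ⟨b, ?_⟩ (mem_image_of_mem _ hs) hle
  rintro _ ⟨u, hu, rfl⟩
  exact le_add_of_le_of_nonneg (hb (mem_image_of_mem A hu)) (hβ (t - u))

end Curves

section StrictService

variable {T M : Type*} [LinearOrder T] [TopologicalSpace T] [OrderClosedTopology T]
  [CompactIccSpace T] [LinearOrder M] [TopologicalSpace M] [OrderClosedTopology M]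

theorem exists_mem_Icc_le_and_forall_mem_Ioc_lt {f g : T → M} {a b : T} (hab : a ≤ b)
    (hf : ContinuousOn f (Icc a b)) (hg : ContinuousOn g (Icc a b)) (ha : f a ≤ g a) :
    ∃ s ∈ Icc a b, f s ≤ g s ∧ ∀ u ∈ Ioc s b, g u < f u := by
  have hcompact : IsCompact {u ∈ Icc a b | f u ≤ g u} :=
    isCompact_Icc.of_isClosed_subset (isClosed_Icc.isClosed_le hf hg) (sep_subset _ _)
  obtain ⟨s, ⟨hs, hfg⟩, hlast⟩ := hcompact.exists_isGreatest ⟨a, left_mem_Icc.2 hab, ha⟩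
  refine ⟨s, hs, hfg, fun u hu => lt_of_not_ge fun hle => ?_⟩
  exact hu.1.not_ge (hlast ⟨⟨hs.1.trans hu.1.le, hu.2⟩, hle⟩)

variable [Zero T] [Sub T] [AddCommGroup M] [IsOrderedAddMonoid M]

theorem IsStrictServiceCurve.exists_le_and_add_le {A D β : T → M}
    (hβ : IsStrictServiceCurve A D β) (hA : ContinuousOn A (Ici 0)) (hD : ContinuousOn D (Ici 0))
    (h0 : A 0 ≤ D 0) {t : T} (ht : 0 ≤ t) :
    ∃ s ∈ Icc 0 t, A s ≤ D s ∧ A s + β (t - s) ≤ D t := by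
  obtain ⟨s, hs, hAD, hbacklog⟩ := exists_mem_Icc_le_and_forall_mem_Ioc_lt ht
    (hA.mono Icc_subset_Ici_self) (hD.mono Icc_subset_Ici_self) h0
  refine ⟨s, hs, hAD, ?_⟩
  calc
    A s + β (t - s) ≤ D s + (D t - D s) := add_le_add hAD (hβ s t hs.1 hs.2 hbacklog)
    _ = D t := add_sub_cancel _ _

theorem blind_multiplexing_general {A₁ A₂ D₁ D₂ β α₂ : T → M}
    (hA : ContinuousOn (A₁ + A₂) (Ici 0)) (hD : ContinuousOn (D₁ + D₂) (Ici 0))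
    (h0 : (A₁ + A₂) 0 ≤ (D₁ + D₂) 0) (hD₁ : MonotoneOn D₁ (Ici 0))
    (hDA₂ : ∀ t, 0 ≤ t → D₂ t ≤ A₂ t) (hβ : IsStrictServiceCurve (A₁ + A₂) (D₁ + D₂) β)
    (hα₂ : IsArrivalCurve A₂ α₂) {t : T} (ht : 0 ≤ t) :
    ∃ s ∈ Icc 0 t, A₁ s + (β - α₂)⁺ (t - s) ≤ D₁ t := by
  obtain ⟨s, hs, hbacklog, hservice⟩ := hβ.exists_le_and_add_le hA hD h0 ht
  simp only [Pi.add_apply] at hbacklog hservice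
  have hrest : β (t - s) - α₂ (t - s) ≤ D₁ t - A₁ s := by
    have harrival := hα₂ s t hs.1 hs.2
    have hcausal := hDA₂ t ht
    grind
  have hnonneg : 0 ≤ D₁ t - A₁ s := by
    have hflow₁ : A₁ s ≤ D₁ s :=
      le_of_add_le_add_right (hbacklog.trans (add_le_add_right (hDA₂ s hs.1) _))
    exact sub_nonneg.2 (hflow₁.trans (hD₁ hs.1 ht hs.2))
  exact ⟨s, hs, le_sub_iff_add_le'.1 (max_le hrest hnonneg)⟩

end StrictService

/-- **Blind multiplexing.** A node serves two flows with inputs `A₁, A₂` and outputs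
`D₁, D₂` (continuous, nondecreasing, zero at `0`, with `Dᵢ ≤ Aᵢ`), offering a strict
service curve `β` to the aggregate. If `α₂` is an arrival curve for flow 2,
`β 0 ≤ α₂ 0`, and `β₁ t = max (β t − α₂ t) 0` is nondecreasing on `[0,∞)`, then `β₁`
is a service curve for flow 1: `D₁ t ≥ inf_{s ∈ [0,t]} (A₁ s + β₁ (t − s))`. -/
theorem blind_multiplexing
    (A₁ A₂ D₁ D₂ β α₂ : ℝ → ℝ)
    (hA₁c : ContinuousOn A₁ (Set.Ici 0)) (hA₂c : ContinuousOn A₂ (Set.Ici 0))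
    (hD₁c : ContinuousOn D₁ (Set.Ici 0)) (hD₂c : ContinuousOn D₂ (Set.Ici 0))
    (hA₁m : MonotoneOn A₁ (Set.Ici 0)) (hA₂m : MonotoneOn A₂ (Set.Ici 0))
    (hD₁m : MonotoneOn D₁ (Set.Ici 0)) (hD₂m : MonotoneOn D₂ (Set.Ici 0))
    (hA₁0 : A₁ 0 = 0) (hA₂0 : A₂ 0 = 0) (hD₁0 : D₁ 0 = 0) (hD₂0 : D₂ 0 = 0)
    (hD₁A : ∀ t : ℝ, 0 ≤ t → D₁ t ≤ A₁ t) (hD₂A : ∀ t : ℝ, 0 ≤ t → D₂ t ≤ A₂ t)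
    (hstrict : ∀ s t : ℝ, 0 ≤ s → s ≤ t →
      (∀ u ∈ Set.Ioc s t, D₁ u + D₂ u < A₁ u + A₂ u) →
      β (t - s) ≤ (D₁ t + D₂ t) - (D₁ s + D₂ s))
    (hα₂ : ∀ s t : ℝ, 0 ≤ s → s ≤ t → A₂ t - A₂ s ≤ α₂ (t - s))
    (hβ0 : β 0 ≤ α₂ 0)
    (hβ₁mono : MonotoneOn (fun t => max (β t - α₂ t) 0) (Set.Ici 0)) :
    ∀ t : ℝ, 0 ≤ t →
      sInf ((fun s => A₁ s + max (β (t - s) - α₂ (t - s)) 0) '' Set.Icc 0 t)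
        ≤ D₁ t := by
  refine isServiceCurve_of_forall_exists (β := (β - α₂)⁺)
    (fun t => isCompact_Icc.bddBelow_image (hA₁c.mono Icc_subset_Ici_self)) (posPart_nonneg _) ?_
  exact fun t => blind_multiplexing_general (hA₁c.add hA₂c) (hD₁c.add hD₂c)
    (by simp [hA₁0, hA₂0, hD₁0, hD₂0]) hD₁m hD₂A hstrict hα₂
end
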